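/- Let n ≥ 3 be an integer, let η > 0, and let m, α, β satisfy 0 < m < (n−2)/n and 2β/(1−m) > max(α, 0). Let v be a radial solution of (E) on [0,∞). Then there exists a constant A > 0 such that lim_{r→∞} r^{α/β}·v(r) = A. -/

import Mathlib

open Real Set Filter

/-- `v` is a radial solution of the elliptic equation
`((n-1)/m)·((v^m)'' + ((n-1)/r)(v^m)') + α v + β r v' = 0` on `[0, ∞)`
with `v > 0`, `v(0) = η`, `v'(0) = 0`. -/
def IsRadialSol (n : ℕ) (m α β η : ℝ) (v : ℝ → ℝ) : Prop :=
  (∀ r ∈ Set.Ici (0:ℝ), 0 < v r) ∧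
  ContinuousOn v (Set.Ici (0:ℝ)) ∧
  ContDiffOn ℝ 2 v (Set.Ioi (0:ℝ)) ∧
  HasDerivWithinAt v 0 (Set.Ici (0:ℝ)) 0 ∧
  v 0 = η ∧
  ∀ r ∈ Set.Ioi (0:ℝ),
    (((n : ℝ) - 1) / m) * (deriv (deriv (fun s => v s ^ m)) r
      + (((n : ℝ) - 1) / r) * deriv (fun s => v s ^ m) r)
    + α * v r + β * r * deriv v r = 0

/-!
The logarithmic slope `L = r v' / v` of a radial solution satisfies the Riccati equation
`r L' = -m L² - (n - 2) L - r² v^(1-m) / (n - 1) * (α + β L)`, whose last term pulls `L` towards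
`-α / β`. At a constant level `d` just below `min 0 (-α / β)` the right-hand side is positive,
because `m d + n - 2 > 0`, so `L` cannot cross `d` downwards; it cannot start below `d` either,
since `v` would then blow up at the origin. Hence `d ≤ L`, so `v` is at least a multiple of `r ^ d`
for `r ≥ 1`, and the coefficient `r² v^(1-m)` grows at least like the power `r ^ (2 + (1 - m) d)`,
whose exponent is positive. This strong pull makes `L + α / β` decay like a negative power of `r`.
Since `(L + α / β) / r` is the derivative of `log (r ^ (α / β) v)`, that logarithm converges.
-/

section

open Asymptotics MeasureTheory
open scoped Topology

section RealAnalysis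

lemma le_of_deriv_neg_of_eq {f f' : ℝ → ℝ} {a b c : ℝ} (hab : a ≤ b)
    (hf : ∀ x ∈ Icc a b, HasDerivAt f (f' x) x) (hf' : ∀ x ∈ Ico a b, f x = c → f' x < 0)
    (ha : f a ≤ c) : f b ≤ c :=
  image_le_of_deriv_right_lt_deriv_boundary' (HasDerivAt.continuousOn hf)
    (fun x hx ↦ (hf x (Ico_subset_Icc_self hx)).hasDerivWithinAt) ha continuousOn_const
    (fun x _ ↦ hasDerivWithinAt_const x _ c) hf' (right_mem_Icc.2 hab)

lemma exists_tendsto_atTop_of_deriv_isBigO_rpow {E : Type*} [NormedAddCommGroup E]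
    [NormedSpace ℝ E] [CompleteSpace E] {f f' : ℝ → E} {t : ℝ} (ht : t < -1)
    (hf : ∀ᶠ x in atTop, HasDerivAt f (f' x) x) (hO : f' =O[atTop] fun x ↦ x ^ t) :
    ∃ l, Tendsto f atTop (𝓝 l) := by
  obtain ⟨a, ha⟩ := eventually_atTop.1 hf
  have hmeas : StronglyMeasurableAtFilter f' atTop volume :=
    ⟨Ioi a, Ioi_mem_atTop a, (aestronglyMeasurable_deriv f _).congr <|
      (ae_restrict_mem measurableSet_Ioi).mono fun x hx ↦ (ha x (le_of_lt hx)).deriv⟩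
  have hrpow : IntegrableAtFilter (fun x : ℝ ↦ x ^ t) atTop volume :=
    ⟨Ioi 1, Ioi_mem_atTop 1, integrableOn_Ioi_rpow_of_lt ht one_pos⟩
  obtain ⟨s, hs, hint⟩ := hO.integrableAtFilter hmeas hrpow
  obtain ⟨b, hb⟩ := mem_atTop_sets.1 hs
  exact ⟨_, tendsto_limUnder_of_hasDerivAt_of_integrableOn_Ioi
    (fun x hx ↦ ha x ((le_max_left a b).trans (le_of_lt hx)))
    (hint.mono_set fun x hx ↦ hb x ((le_max_right a b).trans (le_of_lt hx)))⟩

lemma isBigO_rpow_of_rpow_mul_sq_le {p : ℝ → ℝ} {σ B : ℝ}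
    (h : ∀ᶠ r in atTop, r ^ σ * p r ^ 2 ≤ B) : p =O[atTop] fun r ↦ r ^ (-(σ / 2)) := by
  refine IsBigO.of_pow two_ne_zero (.of_bound B ?_)
  filter_upwards [h, eventually_gt_atTop 0] with r hr hr0
  have hsq : (r ^ (-(σ / 2))) ^ 2 = (r ^ σ)⁻¹ := by
    rw [← rpow_mul_natCast hr0.le, ← rpow_neg hr0.le]
    congr 1
    push_cast
    ring
  simp only [Pi.pow_apply, hsq, norm_eq_abs, abs_inv, abs_sq, abs_of_pos (rpow_pos_of_pos hr0 σ)]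
  rwa [← div_eq_mul_inv, le_div_iff₀' (rpow_pos_of_pos hr0 σ)]

end RealAnalysis

section Riccati

variable {p E : ℝ → ℝ} {a b m M k σ : ℝ}

lemma riccati_energy_le {y e : ℝ} (hm : 0 ≤ m) (hy : -M ≤ y) :
    σ * y ^ 2 + 2 * y * (b - a * y - m * y ^ 2 - e * y) ≤
      (σ + 1 - 2 * a + 2 * m * M - 2 * e) * y ^ 2 + b ^ 2 := by
  have hcubic : 0 ≤ m * y ^ 2 * (y + M) :=
    mul_nonneg (mul_nonneg hm (sq_nonneg y)) (by linarith)
  have hyoung : 2 * b * y ≤ y ^ 2 + b ^ 2 := by linarith [two_mul_le_add_sq y b]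
  linarith

lemma hasDerivAt_rpow_mul_sq_of_riccati {x : ℝ} (hx : x ≠ 0) (σ : ℝ)
    (hp : HasDerivAt p ((b - a * p x - m * p x ^ 2 - E x * p x) / x) x) :
    HasDerivAt (fun r ↦ r ^ σ * p r ^ 2)
      (x ^ σ / x * (σ * p x ^ 2 + 2 * p x * (b - a * p x - m * p x ^ 2 - E x * p x))) x := by
  refine ((hasDerivAt_rpow_const (.inl hx)).mul (hp.pow 2)).congr_deriv ?_
  rw [rpow_sub_one hx, Pi.pow_apply]
  push_cast
  ring

lemma exists_rpow_mul_sq_le_of_riccati (hm : 0 ≤ m) (hk : 0 < k) (hσ : 0 < σ)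
    (hp : ∀ᶠ r in atTop, HasDerivAt p ((b - a * p r - m * p r ^ 2 - E r * p r) / r) r)
    (hM : ∀ᶠ r in atTop, -M ≤ p r) (hE : ∀ᶠ r in atTop, k * r ^ σ ≤ E r) :
    ∃ B, ∀ᶠ r in atTop, r ^ σ * p r ^ 2 ≤ B := by
  have hlarge : ∀ᶠ r : ℝ in atTop, σ + 1 - 2 * a + 2 * m * M ≤ k * r ^ σ :=
    ((tendsto_rpow_atTop hσ).const_mul_atTop hk).eventually_ge_atTop _
  obtain ⟨R, hR⟩ := eventually_atTop.1 <|
    hp.and <| hM.and <| hE.and <| hlarge.and <| eventually_gt_atTop 0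
  set B := max (R ^ σ * p R ^ 2) (b ^ 2 / k + 1)
  have hB : b ^ 2 < k * B := by
    rw [← div_lt_iff₀' hk]
    exact (lt_add_one _).trans_le (le_max_right _ _)
  refine ⟨B, eventually_atTop.2 ⟨R, fun r hr ↦ ?_⟩⟩
  refine le_of_deriv_neg_of_eq (f := fun r ↦ r ^ σ * p r ^ 2) hr
    (fun x hx ↦ hasDerivAt_rpow_mul_sq_of_riccati (hR x hx.1).2.2.2.2.ne' σ (hR x hx.1).1)
    (fun x hx hxB ↦ ?_) (le_max_left _ _)
  obtain ⟨-, hMx, hEx, hxlarge, hx0⟩ := hR x hx.1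
  refine mul_neg_of_pos_of_neg (div_pos (rpow_pos_of_pos hx0 σ) hx0) ?_
  calc σ * p x ^ 2 + 2 * p x * (b - a * p x - m * p x ^ 2 - E x * p x)
      ≤ (σ + 1 - 2 * a + 2 * m * M - 2 * E x) * p x ^ 2 + b ^ 2 := riccati_energy_le hm hMx
    _ ≤ -(k * x ^ σ) * p x ^ 2 + b ^ 2 := by gcongr; linarith
    _ = b ^ 2 - k * B := by rw [← hxB]; ring
    _ < 0 := sub_neg.2 hB

lemma isBigO_rpow_of_riccati (hm : 0 ≤ m) (hk : 0 < k) (hσ : 0 < σ)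
    (hp : ∀ᶠ r in atTop, HasDerivAt p ((b - a * p r - m * p r ^ 2 - E r * p r) / r) r)
    (hM : ∀ᶠ r in atTop, -M ≤ p r) (hE : ∀ᶠ r in atTop, k * r ^ σ ≤ E r) :
    p =O[atTop] fun r ↦ r ^ (-(σ / 2)) := by
  obtain ⟨B, hB⟩ := exists_rpow_mul_sq_le_of_riccati hm hk hσ hp hM hE
  exact isBigO_rpow_of_rpow_mul_sq_le hB

end Riccati

section Elasticity

/-- The elasticity `r v'(r) / v(r)` of `v`, i.e. its slope `d log v / d log r` in logarithmic
coordinates. It is constant equal to `c` for `v r = r ^ c`. -/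
noncomputable def elasticity (v : ℝ → ℝ) (r : ℝ) : ℝ :=
  r * logDeriv v r

variable {v : ℝ → ℝ} {r c : ℝ}

lemma hasDerivAt_rpow_mul (hr : r ≠ 0) (hv : v r ≠ 0) (hd : DifferentiableAt ℝ v r) (c : ℝ) :
    HasDerivAt (fun x ↦ x ^ c * v x) (r ^ c * v r * ((elasticity v r + c) / r)) r := by
  refine ((hasDerivAt_rpow_const (.inl hr)).mul hd.hasDerivAt).congr_deriv ?_
  rw [rpow_sub_one hr, elasticity, logDeriv_apply]
  field_simp
  ring

lemma hasDerivAt_log_rpow_mul (hr : 0 < r) (hv : v r ≠ 0) (hd : DifferentiableAt ℝ v r) (c : ℝ) :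
    HasDerivAt (fun x ↦ log (x ^ c * v x)) ((elasticity v r + c) / r) r := by
  have hne : r ^ c * v r ≠ 0 := mul_ne_zero (rpow_pos_of_pos hr c).ne' hv
  exact ((hasDerivAt_rpow_mul hr.ne' hv hd c).log hne).congr_deriv (mul_div_cancel_left₀ _ hne)

lemma monotoneOn_rpow_mul {s : Set ℝ} (hs : Convex ℝ s) (hs0 : s ⊆ Ioi 0)
    (hv : ∀ x ∈ s, 0 < v x) (hd : ∀ x ∈ s, DifferentiableAt ℝ v x)
    (hc : ∀ x ∈ s, -c ≤ elasticity v x) : MonotoneOn (fun x ↦ x ^ c * v x) s := by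
  have hderiv (x) (hx : x ∈ s) := hasDerivAt_rpow_mul (hs0 hx).ne' (hv x hx).ne' (hd x hx) c
  refine monotoneOn_of_hasDerivWithinAt_nonneg hs (HasDerivAt.continuousOn hderiv)
    (fun x hx ↦ (hderiv x (interior_subset hx)).hasDerivWithinAt) fun x hx ↦ ?_
  replace hx := interior_subset hx
  have hx0 : 0 < x := hs0 hx
  exact mul_nonneg (mul_nonneg (rpow_nonneg hx0.le c) (hv x hx).le)
    (div_nonneg (by linarith [hc x hx]) hx0.le)

lemma exists_neg_lt_elasticity {b δ : ℝ} (hb : 0 < b) (hδ : 0 < δ)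
    (hcont : ContinuousOn v (Icc 0 b)) (hpos : ∀ x ∈ Ioc 0 b, 0 < v x)
    (hd : ∀ x ∈ Ioo 0 b, DifferentiableAt ℝ v x) : ∃ x ∈ Ioo 0 b, -δ < elasticity v x := by
  by_contra! hle
  have hanti : AntitoneOn (fun x ↦ x ^ δ * v x) (Icc 0 b) := by
    refine antitoneOn_of_hasDerivWithinAt_nonpos (convex_Icc 0 b)
      (f' := fun x ↦ x ^ δ * v x * ((elasticity v x + δ) / x))
      ((continuous_rpow_const hδ.le).continuousOn.mul hcont) ?_ ?_ <;>
      rw [interior_Icc] <;> intro x hx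
    · exact (hasDerivAt_rpow_mul hx.1.ne' (hpos x (Ioo_subset_Ioc_self hx)).ne' (hd x hx)
        δ).hasDerivWithinAt
    · exact mul_nonpos_of_nonneg_of_nonpos
        (mul_nonneg (rpow_nonneg hx.1.le δ) (hpos x (Ioo_subset_Ioc_self hx)).le)
        (div_nonpos_of_nonpos_of_nonneg (by linarith [hle x hx]) hx.1.le)
  have hend : b ^ δ * v b ≤ 0 := by
    simpa [zero_rpow hδ.ne'] using hanti (left_mem_Icc.2 hb.le) (right_mem_Icc.2 hb.le) hb.le
  exact hend.not_gt (mul_pos (rpow_pos_of_pos hb δ) (hpos b (right_mem_Ioc.2 hb)))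

lemma exists_pos_tendsto_rpow_mul {t : ℝ} (ht : t < 0) (hv : ∀ᶠ r in atTop, 0 < v r)
    (hd : ∀ᶠ r in atTop, DifferentiableAt ℝ v r)
    (hO : (fun r ↦ elasticity v r + c) =O[atTop] fun r ↦ r ^ t) :
    ∃ A, 0 < A ∧ Tendsto (fun r ↦ r ^ c * v r) atTop (𝓝 A) := by
  have hlog : ∀ᶠ r in atTop,
      HasDerivAt (fun x ↦ log (x ^ c * v x)) ((elasticity v r + c) / r) r := by
    filter_upwards [hv, hd, eventually_gt_atTop 0] with r hvr hdr hr
    exact hasDerivAt_log_rpow_mul hr hvr.ne' hdr c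
  have hO' : (fun r ↦ (elasticity v r + c) / r) =O[atTop] fun r ↦ r ^ (t - 1) := by
    refine (hO.mul (isBigO_refl (fun r : ℝ ↦ r⁻¹) atTop)).congr' (.of_eq rfl) ?_
    filter_upwards [eventually_gt_atTop 0] with r hr
    rw [rpow_sub_one hr.ne', div_eq_mul_inv]
  obtain ⟨l, hl⟩ := exists_tendsto_atTop_of_deriv_isBigO_rpow (by linarith) hlog hO'
  refine ⟨exp l, exp_pos l, (continuous_exp.tendsto l |>.comp hl).congr' ?_⟩
  filter_upwards [hv, eventually_gt_atTop 0] with r hvr hr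
  exact exp_log (mul_pos (rpow_pos_of_pos hr c) hvr)

end Elasticity

namespace IsRadialSol

variable {n : ℕ} {m α β η d r : ℝ} {v : ℝ → ℝ}

lemma pos (hv : IsRadialSol n m α β η v) (hr : 0 ≤ r) : 0 < v r :=
  hv.1 r hr

lemma continuousOn (hv : IsRadialSol n m α β η v) : ContinuousOn v (Ici 0) :=
  hv.2.1

lemma contDiffOn (hv : IsRadialSol n m α β η v) : ContDiffOn ℝ 2 v (Ioi 0) :=
  hv.2.2.1

lemma differentiableAt (hv : IsRadialSol n m α β η v) (hr : 0 < r) : DifferentiableAt ℝ v r :=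
  (hv.contDiffOn.differentiableOn two_ne_zero).differentiableAt (Ioi_mem_nhds hr)

lemma differentiableAt_elasticity (hv : IsRadialSol n m α β η v) (hr : 0 < r) :
    DifferentiableAt ℝ (elasticity v) r := by
  have hderiv : ContDiffOn ℝ 1 (deriv v) (Ioi 0) :=
    hv.contDiffOn.deriv_of_isOpen isOpen_Ioi (by norm_num)
  exact differentiableAt_id.mul <|
    ((hderiv.differentiableOn one_ne_zero).differentiableAt (Ioi_mem_nhds hr)).div
      (hv.differentiableAt hr) (hv.pos hr.le).ne'

lemma hasDerivAt_rpow (hv : IsRadialSol n m α β η v) (hr : 0 < r) :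
    HasDerivAt (fun s ↦ v s ^ m) (m * (v r ^ m * elasticity v r) / r) r := by
  have hvr := (hv.pos hr.le).ne'
  refine ((hv.differentiableAt hr).hasDerivAt.rpow_const (.inl hvr)).congr_deriv ?_
  rw [rpow_sub_one hvr, elasticity, logDeriv_apply]
  field_simp

lemma deriv_deriv_rpow (hv : IsRadialSol n m α β η v) (hr : 0 < r) :
    deriv (deriv fun s ↦ v s ^ m) r = m * v r ^ m *
      (m * elasticity v r ^ 2 - elasticity v r + r * deriv (elasticity v) r) / r ^ 2 := by
  have hfirst : (deriv fun s ↦ v s ^ m) =ᶠ[𝓝 r] fun s ↦ m * (v s ^ m * elasticity v s) / s := by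
    filter_upwards [Ioi_mem_nhds hr] with s hs
    exact (hv.hasDerivAt_rpow hs).deriv
  rw [hfirst.deriv_eq]
  refine ((((hv.hasDerivAt_rpow hr).mul
    (hv.differentiableAt_elasticity hr).hasDerivAt).const_mul m).div
      (hasDerivAt_id r) hr.ne').deriv.trans ?_
  simp only [Pi.mul_apply, id]
  field_simp
  ring

lemma hasDerivAt_elasticity (hn : n ≠ 1) (hm : m ≠ 0) (hv : IsRadialSol n m α β η v)
    (hr : 0 < r) : HasDerivAt (elasticity v)
      ((-m * elasticity v r ^ 2 - (n - 2) * elasticity v r -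
        r ^ 2 * v r ^ (1 - m) / (n - 1) * (α + β * elasticity v r)) / r) r := by
  refine (hv.differentiableAt_elasticity hr).hasDerivAt.congr_deriv ?_
  have hvr := hv.pos hr.le
  have hn' : (n : ℝ) - 1 ≠ 0 := sub_ne_zero.2 (by exact_mod_cast hn)
  have hvm : v r ^ m ≠ 0 := (rpow_pos_of_pos hvr m).ne'
  have hderiv : r * deriv v r = v r * elasticity v r := by
    rw [elasticity, logDeriv_apply]
    field_simp
  have hode := hv.2.2.2.2.2 r hr
  rw [hv.deriv_deriv_rpow hr, (hv.hasDerivAt_rpow hr).deriv, mul_assoc β, hderiv] at hode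
  rw [rpow_sub hvr, rpow_one]
  field_simp at hode ⊢
  linear_combination hode

lemma le_elasticity (hm : 0 < m) (hv : IsRadialSol n m α β η v) (hd : d < 0)
    (hdn : 0 < m * d + (n - 2)) (hdβ : α + β * d < 0) (hr : 0 < r) : d ≤ elasticity v r := by
  have hn : (0 : ℝ) < n - 1 := by nlinarith
  obtain ⟨a, ha, hda⟩ : ∃ a ∈ Ioo 0 r, d < elasticity v a := by
    simpa using exists_neg_lt_elasticity hr (neg_pos.2 hd)
      (hv.continuousOn.mono Icc_subset_Ici_self) (fun x hx ↦ hv.pos hx.1.le)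
      fun x hx ↦ hv.differentiableAt hx.1
  have hderiv (x) (hx : x ∈ Icc a r) :=
    (hv.hasDerivAt_elasticity (by rintro rfl; simp at hn) hm.ne' (ha.1.trans_le hx.1)).neg
  refine neg_le_neg_iff.1 (le_of_deriv_neg_of_eq (f := -elasticity v) ha.2.le hderiv
    (fun x hx hxd ↦ ?_) (neg_le_neg hda.le))
  have hx : 0 < x := ha.1.trans_le hx.1
  have hcoeff : 0 < x ^ 2 * v x ^ (1 - m) / (n - 1) :=
    div_pos (mul_pos (pow_pos hx 2) (rpow_pos_of_pos (hv.pos hx.le) _)) hn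
  rw [neg_inj.1 hxd]
  refine neg_neg_of_pos (div_pos ?_ hx)
  linarith [mul_pos_of_neg_of_neg hd (neg_neg_of_pos hdn), mul_neg_of_pos_of_neg hcoeff hdβ]

lemma mul_rpow_le_sq_mul_rpow (hm : m ≤ 1) (hv : IsRadialSol n m α β η v)
    (hd : ∀ x, 0 < x → d ≤ elasticity v x) (hr : 1 ≤ r) :
    v 1 ^ (1 - m) * r ^ (2 + (1 - m) * d) ≤ r ^ 2 * v r ^ (1 - m) := by
  have hr0 : 0 < r := one_pos.trans_le hr
  have hv1 : 0 < v 1 := hv.pos zero_le_one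
  have hmono : MonotoneOn (fun x ↦ x ^ (-d) * v x) (Ioi 0) :=
    monotoneOn_rpow_mul (convex_Ioi 0) subset_rfl (fun x hx ↦ hv.pos (le_of_lt hx))
      (fun x hx ↦ hv.differentiableAt hx) (by simpa using hd)
  have hgrowth : v 1 * r ^ d ≤ v r := by
    have := hmono (mem_Ioi.2 one_pos) hr0 hr
    simpa [rpow_neg hr0.le, inv_mul_eq_div, le_div_iff₀ (rpow_pos_of_pos hr0 d)] using this
  calc v 1 ^ (1 - m) * r ^ (2 + (1 - m) * d)
      = r ^ 2 * (v 1 * r ^ d) ^ (1 - m) := by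
        rw [mul_rpow hv1.le (rpow_nonneg hr0.le d), ← rpow_mul hr0.le, rpow_add hr0, rpow_two,
          mul_comm d]
        ring
    _ ≤ r ^ 2 * v r ^ (1 - m) := by gcongr

lemma isBigO_elasticity_add (hn : 1 < n) (hm : 0 < m) (hm1 : m ≤ 1) (hβ : 0 < β)
    (hv : IsRadialSol n m α β η v) (hd : ∀ x, 0 < x → d ≤ elasticity v x)
    (hσ : 0 < 2 + (1 - m) * d) :
    (fun r ↦ elasticity v r + α / β) =O[atTop] fun r ↦ r ^ (-((2 + (1 - m) * d) / 2)) := by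
  have hn' : (0 : ℝ) < n - 1 := sub_pos.2 (by exact_mod_cast hn)
  refine isBigO_rpow_of_riccati (E := fun r ↦ β / (n - 1) * (r ^ 2 * v r ^ (1 - m)))
    (m := m) (a := n - 2 - 2 * m * (α / β)) (b := α / β * (n - 2 - m * (α / β)))
    (M := -(d + α / β)) (k := β / (n - 1) * v 1 ^ (1 - m)) hm.le
    (mul_pos (div_pos hβ hn') (rpow_pos_of_pos (hv.pos zero_le_one) _)) hσ ?_ ?_ ?_
  · filter_upwards [eventually_gt_atTop 0] with r hr
    refine ((hv.hasDerivAt_elasticity hn.ne' hm.ne' hr).add_const (α / β)).congr_deriv ?_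
    field_simp
    ring
  · filter_upwards [eventually_gt_atTop 0] with r hr
    linarith [hd r hr]
  · filter_upwards [eventually_ge_atTop 1] with r hr
    rw [mul_assoc]
    exact mul_le_mul_of_nonneg_left (hv.mul_rpow_le_sq_mul_rpow hm1 hd hr) (div_pos hβ hn').le

end IsRadialSol

section Parameters

variable {N m α β : ℝ}

-- Every `d` slightly below `-max (α / β) 0` qualifies.
lemma exists_slope_lt (hN : 2 < N) (hβ : 0 < β) (hα : (1 - m) * α < 2 * β)
    (hαN : m * α < (N - 2) * β) :
    ∃ d < 0, 0 < m * d + (N - 2) ∧ α + β * d < 0 ∧ 0 < 2 + (1 - m) * d := by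
  set c := max (α / β) 0
  have hc : c = α / β ∨ c = 0 := max_choice _ _
  have hN' : 0 < m * -c + (N - 2) := by
    rcases hc with hc | hc <;> rw [hc]
    · field_simp
      linarith
    · linarith
  have hσ' : 0 < 2 + (1 - m) * -c := by
    rcases hc with hc | hc <;> rw [hc]
    · field_simp
      linarith
    · linarith
  have hcontN : ContinuousAt (fun d ↦ m * d + (N - 2)) (-c) := by fun_prop
  have hcontσ : ContinuousAt (fun d ↦ 2 + (1 - m) * d) (-c) := by fun_prop
  obtain ⟨d, hd, hdN, hdσ⟩ := ((eventually_mem_nhdsWithin (s := Iio (-c)) (a := -c)).and <|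
    nhdsWithin_le_nhds <| (hcontN.eventually_const_lt hN').and
      (hcontσ.eventually_const_lt hσ')).exists
  rw [mem_Iio, lt_neg, max_lt_iff, div_lt_iff₀' hβ] at hd
  exact ⟨d, by linarith, hdN, by linarith, hdσ⟩

lemma parameter_bounds_of_lt_sub_two_div (hN : 0 < N) (hm : 0 < m) (hmN : m < (N - 2) / N)
    (hαβ : max α 0 < 2 * β / (1 - m)) :
    m ≤ 1 ∧ 0 < β ∧ (1 - m) * α < 2 * β ∧ m * α < (N - 2) * β := by
  rw [lt_div_iff₀ hN] at hmN
  have hm1 : 0 < 1 - m := by nlinarith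
  rw [lt_div_iff₀ hm1] at hαβ
  have hβ : 0 < β := by
    linarith [mul_nonneg (le_max_right α 0) hm1.le]
  have hα : (1 - m) * α < 2 * β := by
    linarith [mul_le_mul_of_nonneg_right (le_max_left α 0) hm1.le]
  refine ⟨by linarith, hβ, hα, ?_⟩
  have hscaled : (1 - m) * (m * α) < (1 - m) * ((N - 2) * β) :=
    calc (1 - m) * (m * α) = m * ((1 - m) * α) := by ring
      _ < m * (2 * β) := by gcongr
      _ = 2 * m * β := by ring
      _ ≤ (1 - m) * (N - 2) * β := mul_le_mul_of_nonneg_right (by linarith) hβ.le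
      _ = (1 - m) * ((N - 2) * β) := by ring
  exact lt_of_mul_lt_mul_left hscaled hm1.le

end Parameters

theorem stmt8_general {n : ℕ} (hn : 3 ≤ n) {m α β η : ℝ} (hm : 0 < m) (hm1 : m ≤ 1) (hβ : 0 < β)
    (hα : (1 - m) * α < 2 * β) (hαn : m * α < (n - 2) * β)
    {v : ℝ → ℝ} (hv : IsRadialSol n m α β η v) :
    ∃ A : ℝ, 0 < A ∧ Tendsto (fun r : ℝ ↦ r ^ (α / β) * v r) atTop (𝓝 A) := by
  obtain ⟨d, hd, hdn, hdβ, hσ⟩ := exists_slope_lt (by exact_mod_cast hn) hβ hα hαn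
  have hslope (r : ℝ) (hr : 0 < r) : d ≤ elasticity v r := hv.le_elasticity hm hd hdn hdβ hr
  refine exists_pos_tendsto_rpow_mul (neg_neg_of_pos (half_pos hσ)) ?_ ?_
    (hv.isBigO_elasticity_add (by omega) hm hm1 hβ hslope hσ)
  · filter_upwards [eventually_ge_atTop 0] with r hr using hv.pos hr
  · filter_upwards [eventually_gt_atTop 0] with r hr using hv.differentiableAt hr

end

theorem stmt8 (n : ℕ) (hn : 3 ≤ n) (m α β η : ℝ) (hη : 0 < η)
    (hm : 0 < m) (hm' : m < ((n : ℝ) - 2) / n)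
    (hαβ : max α 0 < 2 * β / (1 - m))
    (v : ℝ → ℝ) (hv : IsRadialSol n m α β η v) :
    ∃ A : ℝ, 0 < A ∧
      Tendsto (fun r : ℝ => r ^ (α / β) * v r) atTop (nhds A) := by
  obtain ⟨hm1, hβ, hα, hαn⟩ :=
    parameter_bounds_of_lt_sub_two_div (by exact_mod_cast (by omega : 0 < n)) hm hm' hαβ
  exact stmt8_general hn hm hm1 hβ hα hαn hv
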